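/- arXiv:2004.07593 — 2 statements merged into one kernel-verified Lean document; each statement's English description precedes it below -/
import Mathlib

section
/- (Self-decomposability of stable laws, α ∈ (0,1).) Let α ∈ (0,1), m₁, m₂ ∈ [0,∞) with m₁ + m₂ > 0, and β ∈ ℝ. Then for every η ∈ (0,1) and every t ∈ ℝ, ψ_α(t)/ψ_α(ηt) = exp(it(1-η)Γ_α + (1-η^α) ∫_ℝ (e^{itu} - 1) ν_α(du)); in particular the quotient is again of the same stable exponential form, with location parameter (1-η)Γ_α and Lévy measure (1-η^α)ν_α. -/
open MeasureTheory

/-- The α-stable Lévy measure on ℝ with density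
`u ↦ m₁ u^(-α-1) 1_{(0,∞)}(u) + m₂ |u|^(-α-1) 1_{(-∞,0)}(u)` w.r.t. Lebesgue measure. -/
noncomputable def nuStable (α m₁ m₂ : ℝ) : Measure ℝ :=
  (volume : Measure ℝ).withDensity fun u =>
    ENNReal.ofReal (if 0 < u then m₁ * u ^ (-α - 1) else if u < 0 then m₂ * |u| ^ (-α - 1) else 0)

/-- Location parameter `Γ_α = β - (m₁ - m₂) ∫₀^∞ u^{-α}(1+u²)^{-1} du` for `α ∈ (0,1)`. -/
noncomputable def Gamma01 (α m₁ m₂ β : ℝ) : ℝ :=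
  β - (m₁ - m₂) * ∫ u in Set.Ioi (0 : ℝ), u ^ (-α) / (1 + u ^ 2)

/-- Characteristic function of the `α`-stable law, `α ∈ (0,1)`:
`ψ_α(t) = exp(itΓ_α + ∫_ℝ (e^{itu} - 1) ν_α(du))`. -/
noncomputable def psi01 (α m₁ m₂ β : ℝ) (t : ℝ) : ℂ :=
  Complex.exp (Complex.I * t * (Gamma01 α m₁ m₂ β) +
    ∫ u : ℝ, (Complex.exp (Complex.I * t * u) - 1) ∂(nuStable α m₁ m₂))

/-!
The density of `ν_α` is homogeneous of degree `-α - 1`, so the dilation `u ↦ c u` pushes `ν_α`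
forward to `c ^ α • ν_α`. Hence `∫ (e^{itu} - 1) ν_α(du)` is multiplied by `η ^ α` when `t` is
replaced by `η t`, whereas the drift `itΓ_α` is multiplied by `η`; the quotient is read off by
subtracting exponents.
-/

open Module
open scoped ENNReal

theorem map_withDensity_measurableEquiv {X Y : Type*} [MeasurableSpace X] [MeasurableSpace Y]
    (μ : Measure X) (f : X → ℝ≥0∞) (e : X ≃ᵐ Y) :
    (μ.withDensity f).map e = (μ.map e).withDensity (f ∘ e.symm) := by
  ext s hs
  rw [e.map_apply, withDensity_apply _ (e.measurable hs), withDensity_apply _ hs,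
    e.restrict_map, lintegral_map_equiv]
  simp only [Function.comp_apply, e.symm_apply_apply]

theorem map_smul_withDensity_of_homogeneous {E : Type*} [NormedAddCommGroup E] [NormedSpace ℝ E]
    [MeasurableSpace E] [BorelSpace E] [FiniteDimensional ℝ E] (μ : Measure E)
    [μ.IsAddHaarMeasure] {f : E → ℝ≥0∞} {p : ℝ}
    (hf : ∀ c : ℝ, 0 < c → ∀ x, f (c • x) = ENNReal.ofReal (c ^ p) * f x) {c : ℝ} (hc : 0 < c) :
    (μ.withDensity f).map (c • ·) =
      ENNReal.ofReal (c ^ (-p - finrank ℝ E)) • μ.withDensity f := by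
  have density_pullback : f ∘ (c⁻¹ • ·) = ENNReal.ofReal (c ^ (-p)) • f := by
    ext x
    rw [Function.comp_apply, hf _ (inv_pos.2 hc), Real.inv_rpow hc.le, ← Real.rpow_neg hc.le]
    rfl
  have jacobian : |(c ^ finrank ℝ E)⁻¹| = c ^ (-(finrank ℝ E : ℝ)) := by
    rw [abs_of_pos (by positivity), Real.rpow_neg hc.le, Real.rpow_natCast]
  calc (μ.withDensity f).map (c • ·)
      = (μ.map (c • ·)).withDensity (f ∘ (c⁻¹ • ·)) :=
        map_withDensity_measurableEquiv μ f (MeasurableEquiv.smul₀ c hc.ne')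
    _ = ENNReal.ofReal (c ^ (-p - finrank ℝ E)) • μ.withDensity f := by
        rw [Measure.map_addHaar_smul μ hc.ne', density_pullback, withDensity_smul_measure,
          withDensity_smul' _ _ ENNReal.ofReal_ne_top, smul_smul, jacobian,
          ← ENNReal.ofReal_mul (by positivity), ← Real.rpow_add hc, neg_add_eq_sub]

/-- The density of the `α`-stable Lévy measure `nuStable α m₁ m₂` with respect to Lebesgue measure,
with value `0` at the origin. -/
noncomputable def stableDensity (α m₁ m₂ u : ℝ) : ℝ :=
  if 0 < u then m₁ * u ^ (-α - 1) else if u < 0 then m₂ * |u| ^ (-α - 1) else 0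

section StableMeasure

variable (α m₁ m₂ : ℝ) {c : ℝ}

theorem nuStable_eq_withDensity_stableDensity :
    nuStable α m₁ m₂ = volume.withDensity fun u ↦ ENNReal.ofReal (stableDensity α m₁ m₂ u) :=
  rfl

theorem stableDensity_mul_left (hc : 0 < c) (u : ℝ) :
    stableDensity α m₁ m₂ (c * u) = c ^ (-α - 1) * stableDensity α m₁ m₂ u := by
  have mul_neg_iff_neg : c * u < 0 ↔ u < 0 := smul_neg_iff_of_pos_left hc
  simp only [stableDensity, mul_pos_iff_of_pos_left hc, mul_neg_iff_neg, abs_mul, abs_of_pos hc,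
    Real.mul_rpow hc.le (abs_nonneg u)]
  split_ifs with hpos hneg
  · rw [Real.mul_rpow hc.le hpos.le, mul_left_comm]
  · rw [mul_left_comm]
  · rw [mul_zero]

theorem map_mul_left_nuStable (hc : 0 < c) :
    (nuStable α m₁ m₂).map (c * ·) = ENNReal.ofReal (c ^ α) • nuStable α m₁ m₂ := by
  have density_homogeneous (r : ℝ) (hr : 0 < r) (u : ℝ) :
      ENNReal.ofReal (stableDensity α m₁ m₂ (r • u)) =
        ENNReal.ofReal (r ^ (-α - 1)) * ENNReal.ofReal (stableDensity α m₁ m₂ u) := by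
    rw [smul_eq_mul, stableDensity_mul_left α m₁ m₂ hr, ENNReal.ofReal_mul (by positivity)]
  have degree : -(-α - 1) - (finrank ℝ ℝ : ℝ) = α := by
    rw [finrank_self, Nat.cast_one]
    ring
  simpa only [nuStable_eq_withDensity_stableDensity, smul_eq_mul, degree] using
    map_smul_withDensity_of_homogeneous volume
      (f := fun u ↦ ENNReal.ofReal (stableDensity α m₁ m₂ u)) density_homogeneous hc

theorem integral_comp_mul_left_nuStable {F : Type*} [NormedAddCommGroup F] [NormedSpace ℝ F]
    (hc : 0 < c) (g : ℝ → F) :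
    ∫ u, g (c * u) ∂nuStable α m₁ m₂ = c ^ α • ∫ u, g u ∂nuStable α m₁ m₂ :=
  calc ∫ u, g (c * u) ∂nuStable α m₁ m₂
      = ∫ u, g u ∂(nuStable α m₁ m₂).map (c * ·) :=
        (integral_map_equiv (MeasurableEquiv.mulLeft₀ c hc.ne') g).symm
    _ = c ^ α • ∫ u, g u ∂nuStable α m₁ m₂ := by
        rw [map_mul_left_nuStable α m₁ m₂ hc, integral_smul_measure,
          ENNReal.toReal_ofReal (by positivity)]

theorem integral_exp_sub_one_nuStable_mul_left (hc : 0 < c) (t : ℝ) :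
    ∫ u : ℝ, (Complex.exp (Complex.I * (c * t : ℝ) * u) - 1) ∂nuStable α m₁ m₂ =
      (c ^ α : ℝ) * ∫ u : ℝ, (Complex.exp (Complex.I * t * u) - 1) ∂nuStable α m₁ m₂ := by
  rw [← Complex.real_smul, ← integral_comp_mul_left_nuStable α m₁ m₂ hc]
  congr! 4 with u
  push_cast
  ring

end StableMeasure

theorem stmt_2_general (α m₁ m₂ β : ℝ) (hα : 0 < α) (hα1 : α < 1)
    (hm₁ : 0 ≤ m₁) (hm₂ : 0 ≤ m₂) (η : ℝ) (hη : 0 < η) (t : ℝ) :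
    psi01 α m₁ m₂ β t / psi01 α m₁ m₂ β (η * t) =
      Complex.exp (Complex.I * t * (((1 - η) * Gamma01 α m₁ m₂ β : ℝ) : ℂ) +
        ((1 - η ^ α : ℝ) : ℂ) *
          ∫ u : ℝ, (Complex.exp (Complex.I * t * u) - 1) ∂(nuStable α m₁ m₂)) := by
  rw [psi01, psi01, ← Complex.exp_sub, integral_exp_sub_one_nuStable_mul_left α m₁ m₂ hη]
  congr 1
  push_cast
  ring

theorem stmt_2 (α m₁ m₂ β : ℝ) (hα : 0 < α) (hα1 : α < 1)
    (hm₁ : 0 ≤ m₁) (hm₂ : 0 ≤ m₂) (hm : 0 < m₁ + m₂)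
    (η : ℝ) (hη : 0 < η) (hη1 : η < 1) (t : ℝ) :
    psi01 α m₁ m₂ β t / psi01 α m₁ m₂ β (η * t) =
      Complex.exp (Complex.I * t * (((1 - η) * Gamma01 α m₁ m₂ β : ℝ) : ℂ) +
        ((1 - η ^ α : ℝ) : ℂ) *
          ∫ u : ℝ, (Complex.exp (Complex.I * t * u) - 1) ∂(nuStable α m₁ m₂)) :=
  stmt_2_general α m₁ m₂ β hα hα1 hm₁ hm₂ η hη t
end

section
/- (Stein identity for infinitely divisible laws of type C.) Let ν be a Borel measure on ℝ with ν({0}) = 0, ∫_ℝ min(1,u²) ν(du) < ∞ and ∫_{|u|>1} |u| ν(du) < ∞, let β ∈ ℝ, and let μ be a Borel probability measure on ℝ whose characteristic function satisfies ∫_ℝ e^{itx} dμ(x) = exp(itβ + ∫_ℝ (e^{itu} - 1 - itu·1_{|u|≤1}) ν(du)) for all t ∈ ℝ. Then for every real-valued Schwartz function g on ℝ, ∫_ℝ (x - β) g(x) dμ(x) = ∫_ℝ ∫_ℝ u (g(x+u) - g(x)·1_{|u|≤1}) ν(du) dμ(x), all integrals being absolutely convergent. -/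
open MeasureTheory

/-!
On the Fourier side, the compensated jump operator `N g x = ∫ u (g (x + u) - 1_{|u| ≤ 1} g x) ν(du)`
is the multiplier with symbol `D t = ∫ u (e^{itu} - 1_{|u| ≤ 1}) ν(du)`. Differentiating the
Lévy–Khintchine formula under the integral gives `φ' = i φ (β + D)` for the characteristic function
`φ` of `μ`. By Parseval and an integration by parts, `∫ x f(x) dμ` equals `-i ∫ φ'(2πw) 𝓕f(w) dw`;
substituting the differential equation for `φ` turns this into `β ∫ f dμ + ∫ N f dμ`. Functions with
values in a real space are reduced to this complex identity by testing against linear functionals.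
-/

open Complex Real FourierTransform SchwartzMap
open scoped NNReal

theorem sFinite_of_integrable_of_ne_zero {α F : Type*} [MeasurableSpace α]
    [MeasurableSingletonClass α] [NormedAddCommGroup F] {ν : Measure α} {f : α → F} {a : α}
    (hf : Integrable f ν) (hne : ∀ x ≠ a, f x ≠ 0) : SFinite ν := by
  obtain ⟨t, ht, hzero, _⟩ := hf.aefinStronglyMeasurable.exists_set_sigmaFinite
  have hcompl : ν.restrict tᶜ = ν.restrict tᶜ {a} • Measure.dirac a := by
    rw [← Measure.restrict_singleton, Measure.restrict_eq_self_of_ae_mem (μ := ν.restrict tᶜ)]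
    filter_upwards [hzero] with x hx
    by_contra hxa
    exact hne x hxa hx
  rw [← Measure.restrict_add_restrict_compl ht (μ := ν), hcompl]
  infer_instance

theorem integrable_min_abs_sq {ν : Measure ℝ}
    (hν : Integrable (fun u : ℝ ↦ min 1 (u ^ 2)) ν)
    (hν' : Integrable (fun u : ℝ ↦ |u|) (ν.restrict {u : ℝ | 1 < |u|})) :
    Integrable (fun u : ℝ ↦ min |u| (u ^ 2)) ν := by
  have hlarge : MeasurableSet {u : ℝ | 1 < |u|} := measurableSet_lt (by fun_prop) (by fun_prop)
  refine (hν.add ((integrable_indicator_iff hlarge).2 hν')).mono' (by fun_prop)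
    (ae_of_all _ fun u ↦ ?_)
  rw [Real.norm_of_nonneg (by positivity), Pi.add_apply]
  by_cases hu : 1 < |u|
  · rw [Set.indicator_of_mem (s := {u : ℝ | 1 < |u|}) hu]
    exact (min_le_left _ _).trans (le_add_of_nonneg_left (by positivity))
  · rw [Set.indicator_of_notMem (s := {u : ℝ | 1 < |u|}) hu, add_zero]
    exact min_le_min_right _ (not_lt.1 hu)

theorem sFinite_of_integrable_min_abs_sq {ν : Measure ℝ}
    (hν : Integrable (fun u : ℝ ↦ min |u| (u ^ 2)) ν) : SFinite ν := by
  refine sFinite_of_integrable_of_ne_zero (a := 0) hν fun u hu ↦ ?_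
  have : 0 < min |u| (u ^ 2) := by positivity
  exact this.ne'

theorem exists_lipschitzWith_schwartzMap {D E : Type*} [NormedAddCommGroup D] [NormedSpace ℝ D]
    [NormedAddCommGroup E] [NormedSpace ℝ E] (g : 𝓢(D, E)) : ∃ K, LipschitzWith K g :=
  ⟨_, lipschitzWith_of_nnnorm_fderiv_le g.differentiable
    (SchwartzMap.fderivCLM ℝ D E g).toBoundedContinuousFunction.nnnorm_coe_le_nnnorm⟩

theorem integrable_sub_smul_schwartzMap {E : Type*} [NormedAddCommGroup E] [NormedSpace ℝ E]
    (μ : Measure ℝ) [μ.HasTemperateGrowth] (β : ℝ) (g : 𝓢(ℝ, E)) :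
    Integrable (fun x ↦ (x - β) • g x) μ :=
  (smulLeftCLM E (fun x ↦ x - β) g).integrable.congr
    (ae_of_all _ (smulLeftCLM_apply_apply (by fun_prop) g))

section Parseval

variable {V E : Type*} [NormedAddCommGroup V] [InnerProductSpace ℝ V] [FiniteDimensional ℝ V]
  [MeasurableSpace V] [BorelSpace V] [NormedAddCommGroup E] [NormedSpace ℂ E]

theorem integral_fourierInv_eq_integral_charFun_smul [CompleteSpace E] {μ : Measure V}
    [IsFiniteMeasure μ] {F : V → E} (hF : Integrable F) :
    ∫ x, 𝓕⁻ F x ∂μ = ∫ w, charFun μ ((2 * π) • w) • F w := by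
  have h := VectorFourier.integral_fourierIntegral_smul_eq_flip (μ := μ) (ν := volume)
    (L := -innerₗ V) (f := fun _ ↦ (1 : ℂ)) Real.continuous_fourierChar
    (by simpa using by fun_prop) (integrable_const 1) hF
  have hcharFun (w : V) : charFun μ ((2 * π) • w) =
      VectorFourier.fourierIntegral Real.fourierChar μ (-innerₗ V) (fun _ ↦ 1) w := by
    simp [charFun_apply, VectorFourier.fourierIntegral, Circle.smul_def, Real.fourierChar_apply,
      inner_smul_right]
  have hfourierInv (x : V) :
      𝓕⁻ F x = VectorFourier.fourierIntegral Real.fourierChar volume (-innerₗ V).flip F x := by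
    simp [Real.fourierInv_eq, VectorFourier.fourierIntegral, real_inner_comm]
  simpa only [hcharFun, hfourierInv, one_smul] using h.symm

theorem fourierInv_coe_fourier_schwartzMap [CompleteSpace E] (f : 𝓢(V, E)) :
    𝓕⁻ ⇑(𝓕 f : 𝓢(V, E)) = f := by
  rw [← SchwartzMap.fourierInv_coe, FourierTransform.fourierInv_fourier_eq]

theorem integral_schwartzMap_eq_integral_charFun_smul_fourier [CompleteSpace E] {μ : Measure V}
    [IsFiniteMeasure μ] (f : 𝓢(V, E)) :
    ∫ x, f x ∂μ = ∫ w, charFun μ ((2 * π) • w) • 𝓕 f w := by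
  rw [← integral_fourierInv_eq_integral_charFun_smul (𝓕 f).integrable,
    fourierInv_coe_fourier_schwartzMap]

theorem integrable_charFun_smul {μ : Measure V} [IsFiniteMeasure μ] {F : V → E}
    (hF : Integrable F) : Integrable fun w ↦ charFun μ ((2 * π) • w) • F w := by
  refine hF.bdd_smul _ ?_ (ae_of_all _ fun w ↦ norm_charFun_le _)
  have : Measurable (charFun μ) := measurable_charFun
  fun_prop

theorem hasDerivAt_fourier_schwartzMap (f : 𝓢(ℝ, E)) (w : ℝ) :
    HasDerivAt (fun w ↦ 𝓕 f w) (-(2 * π * I) • 𝓕 (smulLeftCLM E (fun x : ℝ ↦ x) f) w) w := by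
  have h := DFunLike.congr_fun (SchwartzMap.lineDerivOp_fourier_eq f (1 : ℝ)) w
  rw [SchwartzMap.lineDerivOp_apply_eq_fderiv] at h
  have hderiv := ((𝓕 f).hasDerivAt w).congr_deriv h
  simpa [FourierTransform.fourier_smul] using hderiv

theorem integral_smul_schwartzMap_eq_integral_deriv_charFun_smul_fourier [CompleteSpace E]
    {μ : Measure ℝ} [IsFiniteMeasure μ] {φ' : ℝ → ℂ}
    (hφ : ∀ t, HasDerivAt (charFun μ) (φ' t) t) (f : 𝓢(ℝ, E))
    (hint : Integrable fun w ↦ φ' (2 * π * w) • 𝓕 f w) :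
    ∫ x, x • f x ∂μ = -I • ∫ w, φ' (2 * π * w) • 𝓕 f w := by
  have hxf (x : ℝ) : smulLeftCLM E (fun x : ℝ ↦ x) f x = x • f x :=
    smulLeftCLM_apply_apply (by fun_prop) f x
  have hφ2 (w : ℝ) :
      HasDerivAt (fun w ↦ charFun μ ((2 * π) • w)) (2 * π * φ' (2 * π * w)) w := by
    simpa using! (hφ (2 * π * w)).scomp w ((hasDerivAt_id w).const_mul (2 * π))
  have hparts := integral_bilinear_hasDerivAt_right_eq_neg_left_of_integrable
    (L := ContinuousLinearMap.lsmul ℝ ℂ) (fun w _ ↦ hφ2 w)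
    (fun w _ ↦ hasDerivAt_fourier_schwartzMap f w)
    (((integrable_charFun_smul (𝓕 (smulLeftCLM E (fun x : ℝ ↦ x) f)).integrable).smul
      (-(2 * π * I))).congr (ae_of_all _ fun w ↦ smul_comm _ _ _))
    ((hint.smul (2 * π : ℂ)).congr (ae_of_all _ fun w ↦ (mul_smul _ _ _).symm))
    (integrable_charFun_smul (𝓕 f).integrable)
  simp only [ContinuousLinearMap.lsmul_apply, mul_smul (2 * π : ℂ) (φ' _),
    smul_comm _ (-(2 * π * I)), integral_smul] at hparts
  rw [neg_smul, neg_inj, ← integral_schwartzMap_eq_integral_charFun_smul_fourier] at hparts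
  simp only [hxf] at hparts
  rw [← smul_right_inj two_pi_I_ne_zero, hparts, smul_smul]
  congr 1
  linear_combination (2 * π : ℂ) * I_sq

end Parseval

section PlaneWave

/-- The character `x ↦ e^{itx}` of frequency `t`. -/
noncomputable def planeWave (t x : ℝ) : ℂ := cexp (I * t * x)

theorem norm_planeWave (t x : ℝ) : ‖planeWave t x‖ = 1 := by
  simp [planeWave, norm_exp]

theorem planeWave_add (t x y : ℝ) : planeWave t (x + y) = planeWave t x * planeWave t y := by
  simp [planeWave, ← Complex.exp_add, mul_add]

@[fun_prop]
theorem continuous_planeWave : Continuous (Function.uncurry planeWave) := by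
  unfold planeWave Function.uncurry
  fun_prop

theorem hasDerivAt_planeWave_left (t x : ℝ) :
    HasDerivAt (planeWave · x) (I * (x * planeWave t x)) t := by
  have h := (((hasDerivAt_id t).ofReal_comp.const_mul I).mul_const (x : ℂ)).cexp
  exact h.congr_deriv (by simp [planeWave]; ring)

theorem lipschitzWith_planeWave (t : ℝ) : LipschitzWith ‖t‖₊ (planeWave t) := by
  refine LipschitzWith.of_dist_le_mul fun x y ↦ ?_
  have h := Real.norm_exp_I_mul_ofReal_sub_one_le (x := t * (x - y))
  have : planeWave t x - planeWave t y =
      planeWave t y * (cexp (I * (t * (x - y) : ℝ)) - 1) := by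
    rw [mul_sub, planeWave, planeWave, ← Complex.exp_add]
    push_cast
    ring_nf
  rw [dist_eq_norm, this, norm_mul, norm_planeWave, one_mul]
  simpa [Real.dist_eq] using h

theorem charFun_eq_integral_planeWave (μ : Measure ℝ) (t : ℝ) :
    charFun μ t = ∫ x, planeWave t x ∂μ := by
  simp only [charFun_apply_real, planeWave, mul_comm, mul_left_comm]

theorem fourierInv_eq_integral_planeWave_smul {E : Type*} [NormedAddCommGroup E] [NormedSpace ℂ E]
    (F : ℝ → E) (x : ℝ) : 𝓕⁻ F x = ∫ w, planeWave (2 * π * w) x • F w := by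
  rw [Real.fourierInv_eq']
  congr! 3 with w
  simp [planeWave]
  ring_nf

end PlaneWave

section Jump

variable {E : Type*} [NormedAddCommGroup E] [NormedSpace ℝ E]

/-- The integrand at jump size `u` of the Stein operator: the increment of `g` at `x` weighted by
`u`, with compensation by `g x` only for the jumps of size at most `1`. -/
noncomputable def compensatedJump (g : ℝ → E) (x u : ℝ) : E :=
  u • (g (x + u) - if |u| ≤ 1 then g x else 0)

/-- The nonlocal part of the Stein operator of an infinitely divisible law with Lévy measure `ν`;
its value is `0` where the compensated jumps are not `ν`-integrable. -/
noncomputable def steinOperator (ν : Measure ℝ) (g : ℝ → E) (x : ℝ) : E :=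
  ∫ u, compensatedJump g x u ∂ν

theorem norm_compensatedJump_le {g : ℝ → E} {C : ℝ} {K : ℝ≥0} (hC : ∀ y, ‖g y‖ ≤ C)
    (hK : LipschitzWith K g) (x u : ℝ) :
    ‖compensatedJump g x u‖ ≤ (C + K) * min |u| (u ^ 2) := by
  have hC0 : 0 ≤ C := (norm_nonneg _).trans (hC 0)
  rw [compensatedJump, norm_smul, Real.norm_eq_abs]
  split_ifs with hu
  · have hdiff : ‖g (x + u) - g x‖ ≤ K * |u| := by
      simpa [dist_eq_norm] using hK.dist_le_mul (x + u) x
    have hmin : min |u| (u ^ 2) = u ^ 2 :=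
      min_eq_right (by rw [← sq_abs]; nlinarith [abs_nonneg u])
    calc |u| * ‖g (x + u) - g x‖ ≤ |u| * (K * |u|) := by gcongr
      _ = K * u ^ 2 := by rw [← sq_abs u]; ring
      _ ≤ (C + K) * min |u| (u ^ 2) := by rw [hmin]; gcongr; linarith
  · have hmin : min |u| (u ^ 2) = |u| := min_eq_left (by rw [← sq_abs]; nlinarith)
    calc |u| * ‖g (x + u) - 0‖ ≤ |u| * C := by rw [sub_zero]; gcongr; exact hC _
      _ ≤ (C + K) * min |u| (u ^ 2) := by
        rw [hmin, mul_comm]; gcongr; exact le_add_of_nonneg_right K.2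

theorem stronglyMeasurable_compensatedJump {α : Type*} [TopologicalSpace α]
    [TopologicalSpace.PseudoMetrizableSpace α] [SecondCountableTopology α] [MeasurableSpace α]
    [OpensMeasurableSpace α] {g : α → ℝ → E} {x : α → ℝ} (hg : Continuous (Function.uncurry g))
    (hx : Continuous x) :
    StronglyMeasurable fun p : α × ℝ ↦ compensatedJump (g p.1) (x p.1) p.2 := by
  have hadd : Continuous fun p : α × ℝ ↦ g p.1 (x p.1 + p.2) :=
    hg.comp (f := fun p : α × ℝ ↦ (p.1, x p.1 + p.2)) (by fun_prop)
  have hbase : Continuous fun p : α × ℝ ↦ g p.1 (x p.1) :=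
    hg.comp (f := fun p : α × ℝ ↦ (p.1, x p.1)) (by fun_prop)
  have hsmall : MeasurableSet {p : α × ℝ | |p.2| ≤ 1} :=
    measurableSet_le (by fun_prop) (by fun_prop)
  exact continuous_snd.stronglyMeasurable.smul (hadd.stronglyMeasurable.sub
    (hbase.stronglyMeasurable.ite hsmall stronglyMeasurable_const))

variable {ν : Measure ℝ}

theorem integrable_compensatedJump (hν : Integrable (fun u ↦ min |u| (u ^ 2)) ν) {g : ℝ → E}
    {C : ℝ} {K : ℝ≥0} (hC : ∀ y, ‖g y‖ ≤ C) (hK : LipschitzWith K g) (x : ℝ) :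
    Integrable (compensatedJump g x) ν :=
  (hν.const_mul (C + K)).mono'
    ((stronglyMeasurable_compensatedJump (g := fun _ ↦ g)
      (hK.continuous.comp continuous_snd) continuous_id).comp_measurable
      measurable_prodMk_left).aestronglyMeasurable
    (ae_of_all _ (norm_compensatedJump_le hC hK x))

theorem norm_steinOperator_le (hν : Integrable (fun u ↦ min |u| (u ^ 2)) ν) {g : ℝ → E}
    {C : ℝ} {K : ℝ≥0} (hC : ∀ y, ‖g y‖ ≤ C) (hK : LipschitzWith K g) (x : ℝ) :
    ‖steinOperator ν g x‖ ≤ (C + K) * ∫ u, min |u| (u ^ 2) ∂ν := by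
  rw [← integral_const_mul]
  exact norm_integral_le_of_norm_le (hν.const_mul _)
    (ae_of_all _ (norm_compensatedJump_le hC hK x))

theorem stronglyMeasurable_steinOperator [SFinite ν] {g : ℝ → E} (hg : Continuous g) :
    StronglyMeasurable (steinOperator ν g) :=
  (stronglyMeasurable_compensatedJump (g := fun _ ↦ g) (hg.comp continuous_snd)
    continuous_id).integral_prod_right

theorem compensatedJump_clm_comp {F : Type*} [NormedAddCommGroup F] [NormedSpace ℝ F]
    (L : E →L[ℝ] F) (g : ℝ → E) (x u : ℝ) :
    compensatedJump (L ∘ g) x u = L (compensatedJump g x u) := by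
  simp only [compensatedJump, Function.comp_apply]
  split_ifs <;> simp

theorem steinOperator_clm_comp {F : Type*} [NormedAddCommGroup F] [NormedSpace ℝ F]
    [CompleteSpace E] [CompleteSpace F] (L : E →L[ℝ] F) {g : ℝ → E} {x : ℝ}
    (hg : Integrable (compensatedJump g x) ν) :
    steinOperator ν (L ∘ g) x = L (steinOperator ν g x) := by
  simp only [steinOperator, compensatedJump_clm_comp, L.integral_comp_comm hg]

end Jump

section Symbol

theorem compensatedJump_planeWave (t x u : ℝ) :
    compensatedJump (planeWave t) x u = planeWave t x * compensatedJump (planeWave t) 0 u := by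
  have h0 : planeWave t 0 = 1 := by simp [planeWave]
  simp only [compensatedJump, planeWave_add, h0, real_smul]
  split_ifs <;> ring

theorem norm_compensatedJump_planeWave_le (t x u : ℝ) :
    ‖compensatedJump (planeWave t) x u‖ ≤ (1 + |t|) * min |u| (u ^ 2) :=
  norm_compensatedJump_le (fun y ↦ (norm_planeWave t y).le) (lipschitzWith_planeWave t) x u

/-- The Fourier symbol `t ↦ ∫ u (e^{itu} - 1_{|u| ≤ 1}) ν(du)` of `steinOperator ν`. -/
noncomputable def steinSymbol (ν : Measure ℝ) (t : ℝ) : ℂ := steinOperator ν (planeWave t) 0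

/-- The integrand of the Lévy–Khintchine formula, with truncation at `1`. -/
noncomputable def levyIntegrand (t u : ℝ) : ℂ :=
  planeWave t u - 1 - if |u| ≤ 1 then I * t * u else 0

/-- The jump part of the characteristic exponent of an infinitely divisible law with Lévy
measure `ν`. -/
noncomputable def levyExponent (ν : Measure ℝ) (t : ℝ) : ℂ := ∫ u, levyIntegrand t u ∂ν

theorem measurable_levyIntegrand (t : ℝ) : Measurable (levyIntegrand t) := by
  have hsmall : MeasurableSet {u : ℝ | |u| ≤ 1} := measurableSet_le (by fun_prop) (by fun_prop)
  unfold levyIntegrand planeWave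
  exact Measurable.sub (by fun_prop) (.ite hsmall (by fun_prop) (by fun_prop))

theorem hasDerivAt_levyIntegrand (t u : ℝ) :
    HasDerivAt (levyIntegrand · u) (I * compensatedJump (planeWave t) 0 u) t := by
  have hlin : HasDerivAt (fun s : ℝ ↦ if |u| ≤ 1 then I * s * u else 0)
      (if |u| ≤ 1 then I * u else 0) t := by
    split_ifs
    · simpa using! (((hasDerivAt_id t).ofReal_comp.const_mul I).mul_const (u : ℂ))
    · exact hasDerivAt_const t 0
  refine (((hasDerivAt_planeWave_left t u).sub_const 1).sub hlin).congr_deriv ?_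
  simp only [compensatedJump, real_smul, zero_add]
  split_ifs
  · simp [planeWave]; ring
  · simp [planeWave]

theorem norm_levyIntegrand_le (t u : ℝ) :
    ‖levyIntegrand t u‖ ≤ (1 + |t|) * min |u| (u ^ 2) * |t| := by
  have hbound (s : ℝ) (hs : s ∈ Metric.closedBall 0 |t|) :
      ‖I * compensatedJump (planeWave s) 0 u‖ ≤ (1 + |t|) * min |u| (u ^ 2) := by
    rw [norm_mul, norm_I, one_mul]
    refine (norm_compensatedJump_planeWave_le s 0 u).trans ?_
    have : |s| ≤ |t| := by simpa using hs
    gcongr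
  simpa [levyIntegrand, planeWave] using
    (convex_closedBall (0 : ℝ) |t|).norm_image_sub_le_of_norm_hasDerivWithin_le (x := 0) (y := t)
      (fun s _ ↦ (hasDerivAt_levyIntegrand s u).hasDerivWithinAt) hbound (by simp) (by simp)

variable {ν : Measure ℝ}

theorem hasDerivAt_levyExponent (hν : Integrable (fun u ↦ min |u| (u ^ 2)) ν) (t : ℝ) :
    HasDerivAt (levyExponent ν) (I * steinSymbol ν t) t := by
  have hmeas (s : ℝ) := (measurable_levyIntegrand s).aestronglyMeasurable (μ := ν)
  have hint : Integrable (levyIntegrand t) ν :=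
    ((hν.const_mul _).mul_const _).mono' (hmeas t) (ae_of_all _ (norm_levyIntegrand_le t))
  have hjump : Integrable (compensatedJump (planeWave t) 0) ν :=
    integrable_compensatedJump hν (fun y ↦ (norm_planeWave t y).le) (lipschitzWith_planeWave t) 0
  have hbound (u s : ℝ) (hs : s ∈ Metric.ball t 1) :
      ‖I * compensatedJump (planeWave s) 0 u‖ ≤ (1 + (|t| + 1)) * min |u| (u ^ 2) := by
    rw [norm_mul, norm_I, one_mul]
    refine (norm_compensatedJump_planeWave_le s 0 u).trans ?_
    have : |s| ≤ |t| + 1 := by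
      linarith [abs_sub_abs_le_abs_sub s t, Real.dist_eq s t ▸ Metric.mem_ball.1 hs]
    gcongr
  rw [steinSymbol, steinOperator, ← integral_const_mul]
  exact (hasDerivAt_integral_of_dominated_loc_of_deriv_le (Metric.ball_mem_nhds t one_pos)
    (.of_forall hmeas) hint (hjump.const_mul I).aestronglyMeasurable (ae_of_all _ hbound)
    (hν.const_mul _) (ae_of_all _ fun u s _ ↦ hasDerivAt_levyIntegrand s u)).2

theorem hasDerivAt_charFun {μ : Measure ℝ} {β : ℝ}
    (hν : Integrable (fun u ↦ min |u| (u ^ 2)) ν)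
    (hμ : ∀ t : ℝ, charFun μ t = cexp (I * t * β + levyExponent ν t)) (t : ℝ) :
    HasDerivAt (charFun μ) (I * (charFun μ t * (β + steinSymbol ν t))) t := by
  have hdrift := ((hasDerivAt_id t).ofReal_comp.const_mul I).mul_const (β : ℂ)
  rw [funext hμ]
  exact (hdrift.add (hasDerivAt_levyExponent hν t)).cexp.congr_deriv (by simp; ring)

end Symbol

section Multiplier

variable {E : Type*} [NormedAddCommGroup E] [NormedSpace ℂ E] {ν : Measure ℝ}

theorem integrable_one_add_abs_mul_norm {F : ℝ → E} (hF : Integrable F)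
    (hF' : Integrable fun w : ℝ ↦ w • F w) (c : ℝ) :
    Integrable fun w : ℝ ↦ (1 + |c * w|) * ‖F w‖ := by
  refine (hF.norm.add (hF'.norm.const_mul |c|)).congr (ae_of_all _ fun w ↦ ?_)
  simp only [Pi.add_apply, norm_smul, Real.norm_eq_abs, abs_mul]
  ring

theorem integrable_prod_compensatedJump_planeWave_smul [SFinite ν]
    (hν : Integrable (fun u ↦ min |u| (u ^ 2)) ν) {F : ℝ → E} (hF : Integrable F)
    (hF' : Integrable fun w ↦ w • F w) (x : ℝ) :
    Integrable (Function.uncurry fun u w ↦ compensatedJump (planeWave (2 * π * w)) x u • F w)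
      (ν.prod volume) := by
  have hmeas := stronglyMeasurable_compensatedJump (g := fun w ↦ planeWave (2 * π * w))
    (x := fun _ ↦ x) (by fun_prop) continuous_const
  refine (hν.mul_prod (integrable_one_add_abs_mul_norm hF hF' (2 * π))).mono'
    ((hmeas.comp_measurable measurable_swap).aestronglyMeasurable.smul
      hF.aestronglyMeasurable.comp_snd) (ae_of_all _ fun p ↦ ?_)
  rw [Function.uncurry, norm_smul, ← mul_assoc, mul_comm (min _ _)]
  exact mul_le_mul_of_nonneg_right (norm_compensatedJump_planeWave_le _ x _) (norm_nonneg _)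

theorem integrable_steinSymbol_smul [CompleteSpace E] [SFinite ν]
    (hν : Integrable (fun u ↦ min |u| (u ^ 2)) ν) {F : ℝ → E} (hF : Integrable F)
    (hF' : Integrable fun w ↦ w • F w) :
    Integrable fun w ↦ steinSymbol ν (2 * π * w) • F w := by
  simpa only [Function.uncurry, integral_smul_const] using!
    (integrable_prod_compensatedJump_planeWave_smul hν hF hF' 0).integral_prod_right

theorem steinOperator_fourierInv [CompleteSpace E] [SFinite ν]
    (hν : Integrable (fun u ↦ min |u| (u ^ 2)) ν)
    {F : ℝ → E} (hF : Integrable F) (hF' : Integrable fun w ↦ w • F w) (x : ℝ) :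
    steinOperator ν (𝓕⁻ F) x = 𝓕⁻ (fun w ↦ steinSymbol ν (2 * π * w) • F w) x := by
  have hwave (y : ℝ) : Integrable fun w ↦ planeWave (2 * π * w) y • F w :=
    hF.bdd_smul 1 (Continuous.aestronglyMeasurable (by fun_prop))
      (ae_of_all _ fun w ↦ (norm_planeWave _ _).le)
  have hjump (u : ℝ) : compensatedJump (𝓕⁻ F) x u =
      ∫ w, compensatedJump (planeWave (2 * π * w)) x u • F w := by
    simp only [compensatedJump, fourierInv_eq_integral_planeWave_smul]
    split_ifs
    · rw [← integral_sub (hwave _) (hwave _), ← integral_smul]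
      simp only [smul_assoc, sub_smul]
    · simp only [sub_zero, ← integral_smul, smul_assoc]
  simp_rw [steinOperator, hjump,
    integral_integral_swap (integrable_prod_compensatedJump_planeWave_smul hν hF hF' x),
    fourierInv_eq_integral_planeWave_smul, integral_smul_const]
  simp_rw [compensatedJump_planeWave _ x, integral_const_mul, mul_smul]
  rfl

end Multiplier

section Stein

variable {ν μ : Measure ℝ} [IsFiniteMeasure μ] {E : Type*} [NormedAddCommGroup E]

theorem integral_sub_smul_schwartzMap_eq_integral_steinOperator_of_complex [NormedSpace ℂ E]
    [CompleteSpace E] [SFinite ν] (hν : Integrable (fun u ↦ min |u| (u ^ 2)) ν) {β : ℝ}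
    (hμ : ∀ t : ℝ, charFun μ t = cexp (I * t * β + levyExponent ν t)) (f : 𝓢(ℝ, E)) :
    ∫ x, (x - β) • f x ∂μ = ∫ x, steinOperator ν f x ∂μ := by
  have hF := (𝓕 f).integrable (μ := volume)
  have hF' : Integrable fun w ↦ w • 𝓕 f w := by
    simpa using integrable_sub_smul_schwartzMap volume 0 (𝓕 f)
  have hD := integrable_steinSymbol_smul hν hF hF'
  have hsplit (w : ℝ) : (I * (charFun μ (2 * π * w) * (β + steinSymbol ν (2 * π * w)))) • 𝓕 f w =
      I • (β • charFun μ ((2 * π) • w) • 𝓕 f w +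
        charFun μ ((2 * π) • w) • steinSymbol ν (2 * π * w) • 𝓕 f w) := by
    simp only [← coe_smul β, smul_smul, ← add_smul, smul_eq_mul]
    ring_nf
  have hβ := (integrable_charFun_smul (μ := μ) hF).fun_smul β
  have hN := integrable_charFun_smul (μ := μ) hD
  have hmul : ∫ x, x • f x ∂μ = β • ∫ x, f x ∂μ + ∫ x, steinOperator ν f x ∂μ := by
    rw [integral_smul_schwartzMap_eq_integral_deriv_charFun_smul_fourier
      (hasDerivAt_charFun hν hμ) f ((hβ.add hN).smul I |>.congr (ae_of_all _ (hsplit · |>.symm)))]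
    simp_rw [hsplit]
    rw [integral_smul, integral_add hβ hN, integral_smul,
      ← integral_schwartzMap_eq_integral_charFun_smul_fourier,
      ← integral_fourierInv_eq_integral_charFun_smul hD, smul_smul]
    simp [← steinOperator_fourierInv hν hF hF', fourierInv_coe_fourier_schwartzMap]
  have hxf : Integrable (fun x ↦ x • f x) μ := by
    simpa using integrable_sub_smul_schwartzMap μ 0 f
  simp_rw [sub_smul]
  rw [integral_sub hxf (f.integrable.fun_smul β), integral_smul, hmul, add_sub_cancel_left]

variable [NormedSpace ℝ E]

theorem integrable_compensatedJump_schwartzMap (hν : Integrable (fun u ↦ min |u| (u ^ 2)) ν)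
    (g : 𝓢(ℝ, E)) (x : ℝ) : Integrable (compensatedJump g x) ν :=
  have ⟨_, hK⟩ := exists_lipschitzWith_schwartzMap g
  integrable_compensatedJump hν g.toBoundedContinuousFunction.norm_coe_le_norm hK x

theorem integrable_steinOperator_schwartzMap [SFinite ν]
    (hν : Integrable (fun u ↦ min |u| (u ^ 2)) ν) (g : 𝓢(ℝ, E)) :
    Integrable (steinOperator ν g) μ :=
  have ⟨_, hK⟩ := exists_lipschitzWith_schwartzMap g
  .of_bound (stronglyMeasurable_steinOperator g.continuous).aestronglyMeasurable _
    (ae_of_all _ (norm_steinOperator_le hν g.toBoundedContinuousFunction.norm_coe_le_norm hK))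

theorem integral_sub_smul_schwartzMap_eq_integral_steinOperator [CompleteSpace E] [SFinite ν]
    (hν : Integrable (fun u ↦ min |u| (u ^ 2)) ν) {β : ℝ}
    (hμ : ∀ t : ℝ, charFun μ t = cexp (I * t * β + levyExponent ν t)) (g : 𝓢(ℝ, E)) :
    ∫ x, (x - β) • g x ∂μ = ∫ x, steinOperator ν g x ∂μ := by
  refine (SeparatingDual.eq_iff_forall_dual_eq (R := ℝ)).2 fun L ↦ ofReal_injective ?_
  let L' : E →L[ℝ] ℂ := ofRealCLM ∘L L
  calc L' (∫ x, (x - β) • g x ∂μ) = ∫ x, (x - β) • postcompCLM L' g x ∂μ := by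
        rw [← L'.integral_comp_comm (integrable_sub_smul_schwartzMap μ β g)]
        simp only [map_smul, postcompCLM_apply]
    _ = ∫ x, steinOperator ν (L' ∘ g) x ∂μ :=
        integral_sub_smul_schwartzMap_eq_integral_steinOperator_of_complex hν hμ _
    _ = L' (∫ x, steinOperator ν g x ∂μ) := by
        rw [← L'.integral_comp_comm (integrable_steinOperator_schwartzMap hν g)]
        simp only [steinOperator_clm_comp L' (integrable_compensatedJump_schwartzMap hν g _)]

theorem stmt_5_general [CompleteSpace E] (hν : Integrable (fun u ↦ min |u| (u ^ 2)) ν) {β : ℝ}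
    (hμ : ∀ t : ℝ, charFun μ t = cexp (I * t * β + levyExponent ν t)) (g : 𝓢(ℝ, E)) :
    Integrable (fun x : ℝ ↦ (x - β) • g x) μ ∧
    (∀ x, Integrable (compensatedJump g x) ν) ∧
    Integrable (steinOperator ν g) μ ∧
    ∫ x, (x - β) • g x ∂μ = ∫ x, steinOperator ν g x ∂μ :=
  have := sFinite_of_integrable_min_abs_sq hν
  ⟨integrable_sub_smul_schwartzMap μ β g, integrable_compensatedJump_schwartzMap hν g,
    integrable_steinOperator_schwartzMap hν g,
    integral_sub_smul_schwartzMap_eq_integral_steinOperator hν hμ g⟩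

end Stein

theorem stmt_5 (ν : Measure ℝ) (hν0 : ν {0} = 0)
    (hν : Integrable (fun u : ℝ => min 1 (u ^ 2)) ν)
    (hν' : Integrable (fun u : ℝ => |u|) (ν.restrict {u : ℝ | 1 < |u|}))
    (β : ℝ) (μ : Measure ℝ) [IsProbabilityMeasure μ]
    (hcf : ∀ t : ℝ, ∫ x : ℝ, Complex.exp (Complex.I * t * x) ∂μ =
      Complex.exp (Complex.I * t * β +
        ∫ u : ℝ, (Complex.exp (Complex.I * t * u) - 1 -
          (if |u| ≤ 1 then Complex.I * t * u else 0)) ∂ν))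
    (g : SchwartzMap ℝ ℝ) :
    Integrable (fun x : ℝ => (x - β) * g x) μ ∧
    (∀ x : ℝ, Integrable (fun u : ℝ => u * (g (x + u) - (if |u| ≤ 1 then g x else 0))) ν) ∧
    Integrable (fun x : ℝ =>
      ∫ u : ℝ, u * (g (x + u) - (if |u| ≤ 1 then g x else 0)) ∂ν) μ ∧
    ∫ x : ℝ, (x - β) * g x ∂μ =
      ∫ x : ℝ, ∫ u : ℝ, u * (g (x + u) - (if |u| ≤ 1 then g x else 0)) ∂ν ∂μ :=
  stmt_5_general (integrable_min_abs_sq hν hν')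
    (fun t ↦ (charFun_eq_integral_planeWave μ t).trans (hcf t)) g
end
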